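/- Let k ≥ 1 and let D be a digraph that is not k-mixing. Then D contains a nonempty subdigraph H with minimum out-degree at least k−1 and minimum in-degree at least k−1; in particular, Mad(D) ≥ 2k − 2. -/

import Mathlib

/-- A relation (digraph) is acyclic if no vertex lies on a directed cycle. -/
def RelAcyclic {V : Type} (r : V → V → Prop) : Prop :=
  ∀ v, ¬ Relation.TransGen r v v

/-- `α` is a `k`-dicolouring of the digraph `D`: each colour class induces
an acyclic subdigraph. -/
def IsDicolouring {V : Type} (D : V → V → Prop) (k : ℕ) (α : V → Fin k) : Prop :=
  ∀ c : Fin k, RelAcyclic (fun u v => D u v ∧ α u = c ∧ α v = c)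

/-- Two colourings differ on exactly one vertex. -/
def RecolAdj {V : Type} {k : ℕ} (α β : V → Fin k) : Prop :=
  ∃ v, α v ≠ β v ∧ ∀ w, w ≠ v → α w = β w

/-- A single edge of the `k`-dicolouring graph `D_k(D)`. -/
def RecolStep {V : Type} (D : V → V → Prop) (k : ℕ) (α β : V → Fin k) : Prop :=
  IsDicolouring D k α ∧ IsDicolouring D k β ∧ RecolAdj α β

/-- The digraph `D` is `k`-mixing: the `k`-dicolouring graph is connected. -/
def Mixing {V : Type} (D : V → V → Prop) (k : ℕ) : Prop :=
  ∀ α β : V → Fin k, IsDicolouring D k α → IsDicolouring D k β →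
    Relation.ReflTransGen (RecolStep D k) α β

/-- Out-degree of `v` in the subdigraph of `D` induced by `S`. -/
noncomputable def outDegOn {V : Type} (D : V → V → Prop) (S : Set V) (v : V) : ℕ :=
  {w ∈ S | D v w}.ncard

/-- In-degree of `v` in the subdigraph of `D` induced by `S`. -/
noncomputable def inDegOn {V : Type} (D : V → V → Prop) (S : Set V) (v : V) : ℕ :=
  {w ∈ S | D w v}.ncard

/-- An oriented graph: a digraph with no digon (hence also no loop). -/
def Oriented {V : Type} (D : V → V → Prop) : Prop :=
  ∀ u v, D u v → ¬ D v u

/-- A walk of length `m` in the `k`-dicolouring graph (a redicolouring sequence):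
consecutive dicolourings differ on exactly one vertex. -/
def RecolWalk {V : Type} (D : V → V → Prop) (k m : ℕ) (γ : ℕ → V → Fin k) : Prop :=
  (∀ i ≤ m, IsDicolouring D k (γ i)) ∧ ∀ i < m, RecolAdj (γ i) (γ (i + 1))

/-- A frozen `k`-dicolouring: no single vertex can be recoloured so as to
yield another `k`-dicolouring. -/
def FrozenDicolouring {V : Type} [DecidableEq V] (D : V → V → Prop) (k : ℕ)
    (α : V → Fin k) : Prop :=
  IsDicolouring D k α ∧
    ∀ (v : V) (c : Fin k), c ≠ α v → ¬ IsDicolouring D k (Function.update α v c)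

/-- The arc set of a digraph, as a set of ordered pairs. -/
def arcSet {V : Type} (D : V → V → Prop) : Set (V × V) := {p | D p.1 p.2}

/-- The arcs of `D` lying inside a set `S` of vertices. -/
def arcSetOn {V : Type} (D : V → V → Prop) (S : Set V) : Set (V × V) :=
  {p | p.1 ∈ S ∧ p.2 ∈ S ∧ D p.1 p.2}

/-!
A vertex `v` with fewer than `k - 1` out-neighbours never obstructs recolouring. Suppose a
recolouring sequence of `D - v` is being followed in `D`. Before each step some colour appears on no
out-neighbour of `v` and differs from the colour about to be introduced. Moving `v` to it first
leaves `v` without a monochromatic out-arc, hence on no monochromatic cycle, both before and after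
the step. So `D` is `k`-mixing as soon as `D - v` is, and by reversing all arcs the same holds for
in-neighbours. In a minimal non-`k`-mixing induced subdigraph every vertex therefore has at least
`k - 1` out-neighbours and at least `k - 1` in-neighbours.
-/

open Function Relation

section Acyclic

variable {V : Type} {r s : V → V → Prop}

theorem RelAcyclic.mono (hs : RelAcyclic s) (h : ∀ u v, r u v → s u v) : RelAcyclic r :=
  fun v hv => hs v (TransGen.mono h v v hv)

theorem relAcyclic_swap : RelAcyclic (swap r) ↔ RelAcyclic r :=
  forall_congr' fun _ => not_congr transGen_swap

theorem RelAcyclic.of_delete_sink {v : V} (hv : ∀ w, ¬ r v w)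
    (h : RelAcyclic fun a b => r a b ∧ a ≠ v ∧ b ≠ v) : RelAcyclic r := by
  have tail_ne {a b : V} (hab : r a b) : a ≠ v := fun ha => hv b (ha ▸ hab)
  have walk_avoids {x y : V} (hxy : TransGen r x y) (hy : y ≠ v) :
      TransGen (fun a b => r a b ∧ a ≠ v ∧ b ≠ v) x y := by
    induction hxy with
    | single hab => exact .single ⟨hab, tail_ne hab, hy⟩
    | tail _ hab ih => exact .tail (ih (tail_ne hab)) ⟨hab, tail_ne hab, hy⟩
  intro x hx
  obtain ⟨_, hxb, -⟩ := TransGen.head'_iff.1 hx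
  exact h x (walk_avoids hx (tail_ne hxb))

end Acyclic

/-- The subdigraph of `D` induced by `S`, kept on the vertex type `V`: the vertices outside `S` stay
as isolated vertices, which does not affect `k`-mixing since finitely many isolated vertices can be
recoloured freely one by one. -/
def inducedOn {V : Type} (D : V → V → Prop) (S : Set V) : V → V → Prop :=
  fun u v => D u v ∧ u ∈ S ∧ v ∈ S

section Induced

variable {V : Type} (D : V → V → Prop)

theorem inducedOn_univ : inducedOn D Set.univ = D := by
  ext u v
  simp only [inducedOn, Set.mem_univ, and_true]

theorem inducedOn_inducedOn (S T : Set V) :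
    inducedOn (inducedOn D S) T = inducedOn D (S ∩ T) := by
  ext u v
  simp only [inducedOn, Set.mem_inter_iff]
  tauto

theorem inducedOn_swap (S : Set V) : inducedOn (swap D) S = swap (inducedOn D S) := by
  ext u v
  simp only [inducedOn, swap, and_comm]

end Induced

section Dicolouring

variable {V : Type} {D : V → V → Prop} {k : ℕ} {α β γ : V → Fin k} {v : V} {b : Fin k}

theorem isDicolouring_iff :
    IsDicolouring D k α ↔ RelAcyclic fun u v => D u v ∧ α u = α v := by
  refine ⟨fun h x hx => ?_, fun h c => h.mono fun u v huv => ⟨huv.1, huv.2.1.trans huv.2.2.symm⟩⟩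
  have walk_in_class {y : V} (hxy : TransGen (fun u v => D u v ∧ α u = α v) x y) :
      α y = α x ∧ TransGen (fun u v => D u v ∧ α u = α x ∧ α v = α x) x y := by
    induction hxy with
    | single hxb => exact ⟨hxb.2.symm, .single ⟨hxb.1, rfl, hxb.2.symm⟩⟩
    | tail _ hbc ih =>
      have hc := hbc.2.symm.trans ih.1
      exact ⟨hc, ih.2.tail ⟨hbc.1, ih.1, hc⟩⟩
  exact h (α x) x (walk_in_class hx).2

theorem isDicolouring_swap : IsDicolouring (swap D) k α ↔ IsDicolouring D k α := by
  rw [isDicolouring_iff, isDicolouring_iff, ← relAcyclic_swap]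
  simp only [swap_def, eq_comm]

theorem IsDicolouring.induced (hα : IsDicolouring D k α) (S : Set V) :
    IsDicolouring (inducedOn D S) k α :=
  fun c => (hα c).mono fun _ _ huv => ⟨huv.1.1, huv.2⟩

theorem IsDicolouring.update_of_delete [DecidableEq V] (hv : ¬ D v v)
    (hγ : IsDicolouring (inducedOn D {v}ᶜ) k γ) (hb : ∀ w, D v w → γ w ≠ b) :
    IsDicolouring D k (update γ v b) := by
  refine isDicolouring_iff.2 (.of_delete_sink (v := v) ?_ ((isDicolouring_iff.1 hγ).mono ?_))
  · rintro w ⟨hw, hcol⟩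
    have hwv : w ≠ v := by rintro rfl; exact hv hw
    rw [update_self, update_of_ne hwv] at hcol
    exact hb w hw hcol.symm
  · rintro u w ⟨⟨huw, hcol⟩, hu, hw⟩
    rw [update_of_ne hu, update_of_ne hw] at hcol
    exact ⟨⟨huw, hu, hw⟩, hcol⟩

end Dicolouring

theorem exists_ne_forall_mem_apply_ne {V : Type*} {k : ℕ} {N : Set V} (hN : N.encard + 1 < k)
    (γ : V → Fin k) (c : Fin k) : ∃ b, b ≠ c ∧ ∀ w ∈ N, γ w ≠ b := by
  have used_lt : (insert c (γ '' N)).encard < (Set.univ : Set (Fin k)).encard :=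
    calc (insert c (γ '' N)).encard
      _ ≤ (γ '' N).encard + 1 := Set.encard_insert_le _ _
      _ ≤ N.encard + 1 := by gcongr; exact Set.encard_image_le γ N
      _ < k := hN
      _ = (Set.univ : Set (Fin k)).encard := by simp
  obtain ⟨b, hb⟩ := (Set.ne_univ_iff_exists_notMem _).1 fun h => used_lt.ne (congrArg _ h)
  simp only [Set.mem_insert_iff, Set.mem_image, not_or, not_exists, not_and] at hb
  exact ⟨b, hb⟩

section Recolouring

variable {V : Type} {D : V → V → Prop} {k : ℕ} {α β γ δ : V → Fin k} {v : V}

theorem recolStep_swap : RecolStep (swap D) k = RecolStep D k := by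
  ext α β
  simp only [RecolStep, isDicolouring_swap]

theorem mixing_swap : Mixing (swap D) k ↔ Mixing D k := by
  simp only [Mixing, isDicolouring_swap, recolStep_swap]

theorem reflTransGen_recolStep_of_eq_off (hα : IsDicolouring D k α) (hβ : IsDicolouring D k β)
    (h : ∀ w, w ≠ v → α w = β w) : ReflTransGen (RecolStep D k) α β := by
  by_cases hv : α v = β v
  · have hαβ : α = β := funext fun w => (eq_or_ne w v).elim (fun hw => hw ▸ hv) (h w)
    exact hαβ ▸ .refl
  · exact .single ⟨hα, hβ, v, hv, h⟩

theorem mixing_of_forall_not [Finite V] (hD : ∀ u v, ¬ D u v) (k : ℕ) : Mixing D k := by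
  classical
  cases nonempty_fintype V
  have dicolouring (α : V → Fin k) : IsDicolouring D k α := fun c x hx => by
    obtain ⟨_, hxb, -⟩ := TransGen.head'_iff.1 hx
    exact hD _ _ hxb.1
  intro α β _ _
  have recolour_on (T : Finset V) : ReflTransGen (RecolStep D k) α (T.piecewise β α) := by
    induction T using Finset.induction_on with
    | empty => rw [Finset.piecewise_empty]
    | insert w T _ ih =>
      rw [Finset.piecewise_insert]
      exact ih.trans <| reflTransGen_recolStep_of_eq_off (v := w) (dicolouring _) (dicolouring _)
        fun u hu => (update_of_ne hu _ _).symm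
  simpa only [Finset.piecewise_univ] using recolour_on Finset.univ

theorem RecolStep.exists_lift_of_delete [DecidableEq V] (hv : ¬ D v v)
    (hdeg : {w | D v w}.encard + 1 < k) (hstep : RecolStep (inducedOn D {v}ᶜ) k γ δ)
    {a : Fin k} (ha : IsDicolouring D k (update γ v a)) :
    ∃ b, IsDicolouring D k (update δ v b) ∧
      ReflTransGen (RecolStep D k) (update γ v a) (update δ v b) := by
  obtain ⟨hγ, hδ, w, -, hw⟩ := hstep
  obtain ⟨b, hbw, hbγ⟩ := exists_ne_forall_mem_apply_ne hdeg γ (δ w)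
  have hbδ (x : V) (hx : D v x) : δ x ≠ b := by
    obtain rfl | hxw := eq_or_ne x w
    · exact hbw.symm
    · exact hw x hxw ▸ hbγ x hx
  have hγb : IsDicolouring D k (update γ v b) := hγ.update_of_delete hv hbγ
  have hδb : IsDicolouring D k (update δ v b) := hδ.update_of_delete hv hbδ
  refine ⟨b, hδb, .trans (b := update γ v b) ?_ ?_⟩
  · exact reflTransGen_recolStep_of_eq_off (v := v) ha hγb fun x hx => by
      rw [update_of_ne hx, update_of_ne hx]
  · exact reflTransGen_recolStep_of_eq_off (v := w) hγb hδb fun x hx => by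
      simp only [update_apply, hw x hx]

theorem Mixing.of_delete (hv : ¬ D v v) (hdeg : {w | D v w}.encard + 1 < k)
    (hmix : Mixing (inducedOn D {v}ᶜ) k) : Mixing D k := by
  classical
  intro α β hα hβ
  have lift_walk {δ : V → Fin k} (hδ : ReflTransGen (RecolStep (inducedOn D {v}ᶜ) k) α δ) :
      ∃ b, IsDicolouring D k (update δ v b) ∧
        ReflTransGen (RecolStep D k) α (update δ v b) := by
    induction hδ with
    | refl => exact ⟨α v, by rwa [update_eq_self], by rw [update_eq_self]⟩
    | tail _ hstep ih =>
      obtain ⟨a, ha, hαa⟩ := ih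
      obtain ⟨b, hb, hab⟩ := hstep.exists_lift_of_delete hv hdeg ha
      exact ⟨b, hb, hαa.trans hab⟩
  obtain ⟨b, hb, hαb⟩ := lift_walk (hmix α β (hα.induced _) (hβ.induced _))
  exact hαb.trans <| reflTransGen_recolStep_of_eq_off (v := v) hb hβ fun w hw =>
    update_of_ne hw _ _

end Recolouring

section Degree

variable {V : Type} {D : V → V → Prop} {k : ℕ} {S : Set V} {v : V}

theorem le_outDegOn_of_not_mixing (hD : ¬ D v v) (hS : S.Finite) (hv : v ∈ S)
    (hnot : ¬ Mixing (inducedOn D S) k) (hmix : Mixing (inducedOn D (S \ {v})) k) :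
    k - 1 ≤ outDegOn D S v := by
  contrapose! hnot
  refine .of_delete (v := v) (fun h => hD h.1) ?_ (by rwa [inducedOn_inducedOn])
  have out_eq : {w | inducedOn D S v w} = {w ∈ S | D v w} := by
    ext w
    simp only [inducedOn, Set.mem_ofPred_eq, hv, true_and, and_comm]
  rw [out_eq, ← (hS.subset (Set.sep_subset S _)).cast_ncard_eq]
  have deg_lt : outDegOn D S v + 1 < k := by omega
  exact_mod_cast deg_lt

theorem le_inDegOn_of_not_mixing (hD : ¬ D v v) (hS : S.Finite) (hv : v ∈ S)
    (hnot : ¬ Mixing (inducedOn D S) k) (hmix : Mixing (inducedOn D (S \ {v})) k) :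
    k - 1 ≤ inDegOn D S v := by
  refine le_outDegOn_of_not_mixing (D := swap D) hD hS hv ?_ ?_
  · rwa [inducedOn_swap, mixing_swap]
  · rwa [inducedOn_swap, mixing_swap]

theorem ncard_arcSetOn_coe (D : V → V → Prop) (S : Finset V) :
    (arcSetOn D S).ncard = ∑ v ∈ S, outDegOn D S v := by
  classical
  have arcs_eq : arcSetOn D S = ↑({p ∈ S ×ˢ S | D p.1 p.2} : Finset (V × V)) := by
    ext p
    simp [arcSetOn, and_assoc]
  have outDeg_eq (v : V) : outDegOn D S v = ({w ∈ S | D v w} : Finset V).card := by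
    rw [← Set.ncard_coe_finset, Finset.coe_filter]
    rfl
  simp only [arcs_eq, outDeg_eq, Set.ncard_coe_finset, Finset.card_filter, Finset.sum_product]

theorem mul_ncard_le_ncard_arcSetOn (hS : S.Finite) {m : ℕ} (hm : ∀ v ∈ S, m ≤ outDegOn D S v) :
    m * S.ncard ≤ (arcSetOn D S).ncard := by
  lift S to Finset V using hS
  rw [ncard_arcSetOn_coe, Set.ncard_coe_finset, mul_comm, ← smul_eq_mul]
  exact Finset.card_nsmul_le_sum S _ m hm

end Degree

/-- If `D` is not `k`-mixing (`k ≥ 1`), then `D` contains a nonempty (induced)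
subdigraph with minimum out-degree and minimum in-degree at least `k - 1`;
in particular `Mad(D) ≥ 2k - 2`, i.e. `|A(H)| ≥ (k - 1) |V(H)|` for this
subdigraph. -/
theorem not_mixing_dense_subdigraph {V : Type} [Fintype V] (D : V → V → Prop)
    (hloopless : Irreflexive D) (k : ℕ) (hk : 1 ≤ k) (hnotmixing : ¬ Mixing D k) :
    ∃ S : Set V, S.Nonempty ∧
      (∀ v ∈ S, k - 1 ≤ outDegOn D S v ∧ k - 1 ≤ inDegOn D S v) ∧
      (k - 1) * S.ncard ≤ (arcSetOn D S).ncard := by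
  obtain ⟨S, hS⟩ := exists_minimal_of_wellFoundedLT
    (fun S : Set V => ¬ Mixing (inducedOn D S) k) ⟨Set.univ, by rwa [inducedOn_univ]⟩
  have nonempty : S.Nonempty := Set.nonempty_iff_ne_empty.2 fun hempty =>
    hS.prop (mixing_of_forall_not (fun _ v huv => Set.notMem_empty v (hempty ▸ huv.2.2)) k)
  have mixing_delete {v : V} (hv : v ∈ S) : Mixing (inducedOn D (S \ {v})) k :=
    not_not.1 (hS.not_prop_of_lt (Set.sdiff_singleton_ssubset.2 hv))
  have outDeg (v : V) (hv : v ∈ S) : k - 1 ≤ outDegOn D S v :=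
    le_outDegOn_of_not_mixing (hloopless v) S.toFinite hv hS.prop (mixing_delete hv)
  have inDeg (v : V) (hv : v ∈ S) : k - 1 ≤ inDegOn D S v :=
    le_inDegOn_of_not_mixing (hloopless v) S.toFinite hv hS.prop (mixing_delete hv)
  exact ⟨S, nonempty, fun v hv => ⟨outDeg v hv, inDeg v hv⟩,
    mul_ncard_le_ncard_arcSetOn S.toFinite outDeg⟩
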